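/- arXiv:2209.13580 — 10 statements merged into one kernel-verified Lean document; each statement's English description precedes it below -/
import Mathlib

section
/- If a complex Banach algebra A is cyclically weakly amenable, then A is essential, i.e. the linear span of {ab : a, b ∈ A} is dense in A. -/
/-- `D : A →L[ℂ] A →L[ℂ] ℂ` (viewed as a continuous linear map `A → A*`) is a
derivation: `D(ab) = D(a)·b + a·D(b)`, where `⟨F·a, x⟩ = ⟨F, ax⟩` and
`⟨a·F, x⟩ = ⟨F, xa⟩`. -/
def IsDerivation {A : Type*} [NonUnitalNormedRing A] [NormedSpace ℂ A]
    (D : A →L[ℂ] A →L[ℂ] ℂ) : Prop :=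
  ∀ a b x : A, D (a * b) x = D a (b * x) + D b (x * a)

/-- `D` is inner: `D = ad_F` for some `F ∈ A*`, i.e. `⟨D(a), b⟩ = F(ab) - F(ba)`. -/
def IsInnerDerivation {A : Type*} [NonUnitalNormedRing A] [NormedSpace ℂ A]
    (D : A →L[ℂ] A →L[ℂ] ℂ) : Prop :=
  ∃ F : A →L[ℂ] ℂ, ∀ a b : A, D a b = F (a * b) - F (b * a)

/-- `D` is cyclic: `⟨D(a), b⟩ + ⟨D(b), a⟩ = 0`. -/
def IsCyclicDerivation {A : Type*} [NonUnitalNormedRing A] [NormedSpace ℂ A]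
    (D : A →L[ℂ] A →L[ℂ] ℂ) : Prop :=
  ∀ a b : A, D a b + D b a = 0

/-- `A` is weakly amenable: every continuous derivation `A → A*` is inner. -/
def WeaklyAmenable (A : Type*) [NonUnitalNormedRing A] [NormedSpace ℂ A] : Prop :=
  ∀ D : A →L[ℂ] A →L[ℂ] ℂ, IsDerivation D → IsInnerDerivation D

/-- `A` is cyclically amenable: every continuous cyclic derivation `A → A*` is inner. -/
def CyclicallyAmenable (A : Type*) [NonUnitalNormedRing A] [NormedSpace ℂ A] : Prop :=
  ∀ D : A →L[ℂ] A →L[ℂ] ℂ, IsDerivation D → IsCyclicDerivation D → IsInnerDerivation D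

/-- `A` is cyclically weakly amenable: every continuous derivation `A → A*` is cyclic. -/
def CyclicallyWeaklyAmenable (A : Type*) [NonUnitalNormedRing A] [NormedSpace ℂ A] : Prop :=
  ∀ D : A →L[ℂ] A →L[ℂ] ℂ, IsDerivation D → IsCyclicDerivation D

/-- `A` is essential: the linear span of products is dense in `A`. -/
def Essential (A : Type*) [NonUnitalNormedRing A] [NormedSpace ℂ A] : Prop :=
  Dense ((Submodule.span ℂ {x : A | ∃ a b : A, a * b = x} : Submodule ℂ A) : Set A)

/-- `φ` is a character of `A`, i.e. `φ ∈ Δ(A)`: a nonzero multiplicative linear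
functional (characters on Banach algebras are automatically continuous). -/
def IsCharacter {A : Type*} [NonUnitalNormedRing A] [NormedSpace ℂ A]
    (φ : A →L[ℂ] ℂ) : Prop :=
  φ ≠ 0 ∧ ∀ a b : A, φ (a * b) = φ a * φ b

/-- `d ∈ A*` is a continuous point derivation at `φ`. -/
def IsPointDerivation {A : Type*} [NonUnitalNormedRing A] [NormedSpace ℂ A]
    (φ d : A →L[ℂ] ℂ) : Prop :=
  ∀ a b : A, d (a * b) = d a * φ b + φ a * d b

/-- `A` is point amenable: every continuous point derivation at some `φ ∈ Δ(A)` is zero. -/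
def PointAmenable (A : Type*) [NonUnitalNormedRing A] [NormedSpace ℂ A] : Prop :=
  ∀ φ d : A →L[ℂ] ℂ, IsCharacter φ → IsPointDerivation φ d → d = 0

/-- `A` is 0-point amenable: every continuous point derivation at some
`φ ∈ Δ₀(A) = Δ(A) ∪ {0}` is zero. -/
def ZeroPointAmenable (A : Type*) [NonUnitalNormedRing A] [NormedSpace ℂ A] : Prop :=
  ∀ φ d : A →L[ℂ] ℂ, (IsCharacter φ ∨ φ = 0) → IsPointDerivation φ d → d = 0

/-- Every cyclically weakly amenable complex Banach algebra is essential. -/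
theorem essential_of_cyclicallyWeaklyAmenable
    (A : Type*) [NonUnitalNormedRing A] [NormedSpace ℂ A]
    [IsScalarTower ℂ A A] [SMulCommClass ℂ A A] [CompleteSpace A]
    (h : CyclicallyWeaklyAmenable A) : Essential A := by
  classical
  set P : Submodule ℂ A := Submodule.span ℂ {x : A | ∃ a b : A, a * b = x} with hP
  change Dense (P : Set A)
  rw [Submodule.dense_iff_topologicalClosure_eq_top, Submodule.eq_top_iff']
  intro x
  by_contra hx
  haveI : IsClosed (P.topologicalClosure : Set A) := P.isClosed_topologicalClosure
  have hne : P.topologicalClosure.mkQ x ≠ 0 := by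
    simpa [Submodule.Quotient.mk_eq_zero] using hx
  obtain ⟨g, hg⟩ := SeparatingDual.exists_ne_zero (R := ℂ) hne
  let F : A →L[ℂ] ℂ := g.comp P.topologicalClosure.mkQL
  have hFx : F x ≠ 0 := hg
  have hF : ∀ a b : A, F (a * b) = 0 := by
    intro a b
    have hab : a * b ∈ P.topologicalClosure :=
      P.le_topologicalClosure (Submodule.subset_span ⟨a, b, rfl⟩)
    have h0 : P.topologicalClosure.mkQ (a * b) = 0 := by
      simpa [Submodule.Quotient.mk_eq_zero] using hab
    change g (P.topologicalClosure.mkQ (a * b)) = 0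
    rw [h0, map_zero]
  have hD := h (F.smulRight F) (by
    intro a b y
    simp [hF]) x x
  simp only [ContinuousLinearMap.smulRight_apply, ContinuousLinearMap.smul_apply,
    smul_eq_mul] at hD
  have h2 : F x * F x = 0 := by linear_combination hD / 2
  exact hFx (mul_self_eq_zero.mp h2)
end

section
/- Let A be a complex Banach algebra, φ ∈ Δ(A), and d ∈ A*. Then d is a continuous point derivation at φ if and only if the operator 𝔇_{d,φ} : A → A* is a derivation. In this case, d(xy) = 0 for all x, y ∈ ker φ. -/
/-- For `φ ∈ Δ(A)` and `d ∈ A*`: `d` is a continuous point derivation at `φ` iff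
`𝔇_{d,φ} : a ↦ d(a)φ` is a derivation `A → A*`; in this case `d` vanishes on
products of elements of `ker φ`. -/
theorem isPointDerivation_iff_smulRight_isDerivation
    {A : Type*} [NonUnitalNormedRing A] [NormedSpace ℂ A]
    [IsScalarTower ℂ A A] [SMulCommClass ℂ A A] [CompleteSpace A]
    (φ d : A →L[ℂ] ℂ) (hφ : IsCharacter φ) :
    (IsPointDerivation φ d ↔ IsDerivation (d.smulRight φ)) ∧
    (IsPointDerivation φ d → ∀ x y : A, φ x = 0 → φ y = 0 → d (x * y) = 0) := by
  obtain ⟨h0, hm⟩ := hφ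
  refine ⟨⟨fun h a b x => ?_, fun h a b => ?_⟩, fun h x y hx hy => ?_⟩
  · simp only [ContinuousLinearMap.smulRight_apply, ContinuousLinearMap.smul_apply, smul_eq_mul]
    rw [h a b, hm, hm]
    ring
  · obtain ⟨x, hx⟩ : ∃ x, φ x ≠ 0 := by
      by_contra hc
      push Not at hc
      exact h0 (ContinuousLinearMap.ext hc)
    have h1 := h a b x
    simp only [ContinuousLinearMap.smulRight_apply, ContinuousLinearMap.smul_apply,
      smul_eq_mul] at h1
    rw [hm, hm] at h1
    apply mul_right_cancel₀ hx
    rw [h1]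
    ring
  · rw [h x y, hx, hy]
    ring
end

section
/- Let A be a commutative complex Banach algebra, φ ∈ Δ(A), and d a nonzero element of A*. Then d is a continuous point derivation at φ if and only if 𝔇_{d,φ} is a continuous derivation from A into A* that is not inner. -/
/-- For a commutative Banach algebra `A`, `φ ∈ Δ(A)` and a nonzero `d ∈ A*`:
`d` is a continuous point derivation at `φ` iff `𝔇_{d,φ}` is a continuous
derivation `A → A*` which is not inner. -/
theorem isPointDerivation_iff_smulRight_not_inner
    {A : Type*} [NonUnitalNormedCommRing A] [NormedSpace ℂ A]
    [IsScalarTower ℂ A A] [SMulCommClass ℂ A A] [CompleteSpace A]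
    (φ d : A →L[ℂ] ℂ) (hφ : IsCharacter φ) (hd : d ≠ 0) :
    IsPointDerivation φ d ↔
      (IsDerivation (d.smulRight φ) ∧ ¬ IsInnerDerivation (d.smulRight φ)) := by
  obtain ⟨hne, hmul⟩ := hφ
  obtain ⟨x, hx⟩ : ∃ x, φ x ≠ 0 := by
    by_contra h
    push Not at h
    exact hne (ContinuousLinearMap.ext h)
  obtain ⟨y, hy⟩ : ∃ y, d y ≠ 0 := by
    by_contra h
    push Not at h
    exact hd (ContinuousLinearMap.ext h)
  constructor
  · intro h
    refine ⟨fun a b z => ?_, ?_⟩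
    · simp only [ContinuousLinearMap.smulRight_apply, ContinuousLinearMap.smul_apply,
        smul_eq_mul, h a b, hmul]
      ring
    · rintro ⟨F, hF⟩
      have h1 := hF y x
      rw [mul_comm x y, sub_self] at h1
      simp only [ContinuousLinearMap.smulRight_apply, ContinuousLinearMap.smul_apply,
        smul_eq_mul] at h1
      exact mul_ne_zero hy hx h1
  · rintro ⟨h, -⟩ a b
    have h1 := h a b x
    simp only [ContinuousLinearMap.smulRight_apply, ContinuousLinearMap.smul_apply,
        smul_eq_mul, hmul] at h1
    apply mul_right_cancel₀ hx
    rw [h1]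
    ring
end

section
/- Let A be an essential complex Banach algebra, φ ∈ Δ(A), and d a nonzero element of A*. Then d is a continuous point derivation at φ if and only if 𝔇_{d,φ} is a continuous derivation from A into A* that is not cyclic. -/
/-- For an essential Banach algebra `A`, `φ ∈ Δ(A)` and a nonzero `d ∈ A*`:
`d` is a continuous point derivation at `φ` iff `𝔇_{d,φ}` is a continuous
derivation `A → A*` which is not cyclic. -/
theorem isPointDerivation_iff_smulRight_not_cyclic
    {A : Type*} [NonUnitalNormedRing A] [NormedSpace ℂ A]
    [IsScalarTower ℂ A A] [SMulCommClass ℂ A A] [CompleteSpace A]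
    (hA : Essential A) (φ d : A →L[ℂ] ℂ) (hφ : IsCharacter φ) (hd : d ≠ 0) :
    IsPointDerivation φ d ↔
      (IsDerivation (d.smulRight φ) ∧ ¬ IsCyclicDerivation (d.smulRight φ)) := by
  obtain ⟨hφ0, hm⟩ := hφ
  obtain ⟨u, hu⟩ : ∃ u, φ u ≠ 0 := by
    by_contra! h
    exact hφ0 (ContinuousLinearMap.ext h)
  constructor
  · intro h
    refine ⟨fun a b x => ?_, fun hc => hd ?_⟩
    · have := h a b
      simp only [ContinuousLinearMap.smulRight_apply, ContinuousLinearMap.smul_apply,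
        smul_eq_mul, hm, this]
      ring
    · have hc' : ∀ a b : A, d a * φ b + d b * φ a = 0 := fun a b => by
        simpa using hc a b
      have hdu : d u = 0 := by
        have h1 : d u * φ u = 0 := by linear_combination (1 / 2) * hc' u u
        exact (mul_eq_zero.mp h1).resolve_right hu
      ext a
      have h2 := hc' a u
      rw [hdu, zero_mul, add_zero] at h2
      simpa using (mul_eq_zero.mp h2).resolve_right hu
  · rintro ⟨h, -⟩ a b
    have h1 := h a b u
    simp only [ContinuousLinearMap.smulRight_apply, ContinuousLinearMap.smul_apply,
      smul_eq_mul, hm] at h1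
    apply mul_right_cancel₀ hu
    linear_combination h1
end

section
/- Let A be a unital complex Banach algebra with identity 1, φ ∈ Δ(A), and d a nonzero element of A*. Then the following are equivalent: (a) d is a continuous point derivation at φ; (b) 𝔇_{d,φ} is a continuous derivation from A into A* that is not inner; (c) 𝔇_{d,φ} is a continuous derivation from A into A* that is not cyclic; (d) d(1) = 0 and d(xy) = 0 for all x, y ∈ ker φ. -/
/-- For a unital Banach algebra `A`, `φ ∈ Δ(A)` and a nonzero `d ∈ A*`, the following
are equivalent: (a) `d` is a continuous point derivation at `φ`; (b) `𝔇_{d,φ}` is a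
non-inner continuous derivation; (c) `𝔇_{d,φ}` is a non-cyclic continuous derivation;
(d) `d(1) = 0` and `d` vanishes on products of elements of `ker φ`. -/
theorem isPointDerivation_tfae_unital
    {A : Type*} [NormedRing A] [NormedAlgebra ℂ A] [CompleteSpace A]
    (φ d : A →L[ℂ] ℂ) (hφ : IsCharacter φ) (hd : d ≠ 0) :
    (IsPointDerivation φ d ↔
      (IsDerivation (d.smulRight φ) ∧ ¬ IsInnerDerivation (d.smulRight φ))) ∧
    (IsPointDerivation φ d ↔
      (IsDerivation (d.smulRight φ) ∧ ¬ IsCyclicDerivation (d.smulRight φ))) ∧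
    (IsPointDerivation φ d ↔
      (d 1 = 0 ∧ ∀ x y : A, φ x = 0 → φ y = 0 → d (x * y) = 0)) := by
  obtain ⟨hφ0, hm⟩ := hφ
  have h1 : φ 1 = 1 := by
    obtain ⟨a, ha⟩ : ∃ a, φ a ≠ 0 := by
      by_contra h
      push Not at h
      exact hφ0 (ContinuousLinearMap.ext h)
    have h := hm a 1
    rw [mul_one] at h
    exact mul_left_cancel₀ ha (by rw [← h, mul_one])
  obtain ⟨c, hc⟩ : ∃ a, d a ≠ 0 := by
    by_contra h
    push Not at h
    exact hd (ContinuousLinearMap.ext h)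
  have hder : IsPointDerivation φ d ↔ IsDerivation (d.smulRight φ) := by
    constructor
    · intro h a b x
      have e := h a b
      simp only [ContinuousLinearMap.smulRight_apply, ContinuousLinearMap.smul_apply,
        smul_eq_mul, hm, e]
      ring
    · intro h a b
      have e := h a b 1
      simp only [ContinuousLinearMap.smulRight_apply, ContinuousLinearMap.smul_apply,
        smul_eq_mul, h1, mul_one, one_mul] at e
      rw [e]
      ring
  have hone : IsPointDerivation φ d → d 1 = 0 := by
    intro h
    have e := h 1 1
    rw [mul_one, h1] at e
    linear_combination -e
  have hinner : ¬ IsInnerDerivation (d.smulRight φ) := by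
    rintro ⟨F, hF⟩
    have e := hF c 1
    simp [h1] at e
    exact hc e
  refine ⟨⟨fun h => ⟨hder.1 h, hinner⟩, fun h => hder.2 h.1⟩,
    ⟨fun h => ⟨hder.1 h, fun hcyc => ?_⟩, fun h => hder.2 h.1⟩,
    ⟨fun h => ⟨hone h, fun x y hx hy => ?_⟩, fun h a b => ?_⟩⟩
  · have e := hcyc c 1
    simp [h1, hone h] at e
    exact hc e
  · rw [h x y, hx, hy]
    ring
  · obtain ⟨h0, hk⟩ := h
    have e := hk (a - φ a • 1) (b - φ b • 1) (by simp [h1]) (by simp [h1])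
    simp only [sub_mul, mul_sub, smul_mul_assoc, mul_smul_comm, one_mul, mul_one, map_sub,
      map_smul, h0, smul_eq_mul] at e
    linear_combination e
end

section
/- Let A be a complex Banach algebra, let D : A → A* be a continuous linear operator, and define the bounded bilinear functional p : A × A → ℂ by p(a, b) = ⟨D(a), b⟩. Then: (i) D is a derivation if and only if p is a quasi-additive functional of A; (ii) D is an inner derivation if and only if p is an inner quasi-additive functional of A; (iii) D is a cyclic derivation if and only if p is a cyclic quasi-additive functional of A; (iv) if A is unital with identity 1, then D is a cyclic derivation if and only if p is a quasi-additive functional with p(a, 1) = 0 for all a ∈ A. -/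
/-- A quasi-additive functional of `A`: a bounded bilinear functional `p` with
`p(ax, b) = p(a, xb) + p(x, ba)`. -/
def IsQuasiAdditive {A : Type*} [NonUnitalNormedRing A] [NormedSpace ℂ A]
    (p : A →L[ℂ] A →L[ℂ] ℂ) : Prop :=
  ∀ a x b : A, p (a * x) b = p a (x * b) + p x (b * a)

/-- An inner quasi-additive functional: `p(a, b) = F(ab - ba)` for some `F ∈ A*`. -/
def IsInnerQuasiAdditive {A : Type*} [NonUnitalNormedRing A] [NormedSpace ℂ A]
    (p : A →L[ℂ] A →L[ℂ] ℂ) : Prop :=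
  ∃ F : A →L[ℂ] ℂ, ∀ a b : A, p a b = F (a * b - b * a)

/-- A cyclic quasi-additive functional: `p(a, a) = 0` for all `a`. -/
def IsCyclicQuasiAdditive {A : Type*} [NonUnitalNormedRing A] [NormedSpace ℂ A]
    (p : A →L[ℂ] A →L[ℂ] ℂ) : Prop :=
  ∀ a : A, p a a = 0

/-- For a continuous linear `D : A → A*` and the bounded bilinear functional
`p(a, b) = ⟨D(a), b⟩`: (i) `D` is a derivation iff `p` is quasi-additive; (ii) `D` is an
inner derivation iff `p` is an inner quasi-additive functional; (iii) `D` is a cyclic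
derivation iff `p` is a cyclic quasi-additive functional; (iv) if `A` has an identity
`e`, then `D` is a cyclic derivation iff `p` is quasi-additive and `p(a, e) = 0`. -/
theorem derivation_iff_quasiAdditive
    {A : Type*} [NonUnitalNormedRing A] [NormedSpace ℂ A]
    [IsScalarTower ℂ A A] [SMulCommClass ℂ A A] [CompleteSpace A]
    (D p : A →L[ℂ] A →L[ℂ] ℂ) (hp : ∀ a b : A, p a b = D a b) :
    (IsDerivation D ↔ IsQuasiAdditive p) ∧
    (IsInnerDerivation D ↔ IsInnerQuasiAdditive p) ∧
    ((IsDerivation D ∧ IsCyclicDerivation D) ↔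
      (IsQuasiAdditive p ∧ IsCyclicQuasiAdditive p)) ∧
    (∀ e : A, (∀ a : A, e * a = a) → (∀ a : A, a * e = a) →
      ((IsDerivation D ∧ IsCyclicDerivation D) ↔
        (IsQuasiAdditive p ∧ ∀ a : A, p a e = 0))) := by
  have hpD : p = D := by
    ext a b
    exact hp a b
  subst hpD
  have hc : IsCyclicDerivation p ↔ IsCyclicQuasiAdditive p := by
    constructor
    · intro h a
      have h1 := h a a
      rw [← two_mul] at h1
      exact (mul_eq_zero.mp h1).resolve_left two_ne_zero
    · intro h a b
      have h1 : p (a + b) (a + b) = 0 := h (a + b)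
      have h2 : p a a = 0 := h a
      have h3 : p b b = 0 := h b
      simp only [map_add, ContinuousLinearMap.add_apply] at h1
      linear_combination h1 - h2 - h3
  refine ⟨Iff.rfl, ?_, and_congr Iff.rfl hc, ?_⟩
  · simp only [IsInnerDerivation, IsInnerQuasiAdditive, map_sub]
  · intro e he he'
    constructor
    · rintro ⟨hd, hcy⟩
      refine ⟨hd, fun a => ?_⟩
      have h1 := hd e e a
      rw [he, he, he'] at h1
      have h2 := hcy a e
      linear_combination h2 + h1
    · rintro ⟨hq, h0⟩
      refine ⟨hq, fun a b => ?_⟩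
      have h1 := hq a b e
      rw [h0, he, he'] at h1
      exact h1.symm
end

section
/- Let A be a commutative complex Banach algebra. Then A is weakly amenable if and only if A is cyclically weakly amenable. -/
/-- A commutative Banach algebra is weakly amenable iff it is cyclically weakly
amenable. -/
theorem weaklyAmenable_iff_cyclicallyWeaklyAmenable_of_comm
    (A : Type*) [NonUnitalNormedCommRing A] [NormedSpace ℂ A]
    [IsScalarTower ℂ A A] [SMulCommClass ℂ A A] [CompleteSpace A] :
    WeaklyAmenable A ↔ CyclicallyWeaklyAmenable A := by
  constructor
  · intro h D hD a b
    obtain ⟨F, hF⟩ := h D hD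
    rw [hF, hF, mul_comm b a]
    simp
  · intro h D hD
    have key : ∀ a b c : A, D (a * b) c = 0 := by
      intro a b c
      have h1 := h (((ContinuousLinearMap.compL ℂ A A ℂ).flip (ContinuousLinearMap.mul ℂ A c)).comp D)
        (by
          intro a b x
          have h2 := hD a b (c * x)
          simp only [ContinuousLinearMap.comp_apply, ContinuousLinearMap.flip_apply,
            ContinuousLinearMap.compL_apply, ContinuousLinearMap.mul_apply']
          rw [h2, mul_left_comm b c x, mul_assoc c x a]) a b
      simp only [ContinuousLinearMap.comp_apply, ContinuousLinearMap.flip_apply,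
        ContinuousLinearMap.compL_apply, ContinuousLinearMap.mul_apply'] at h1
      rw [hD a b c, mul_comm b c]
      exact h1
    have key2 : ∀ c a b : A, D c (a * b) = 0 := by
      intro c a b
      have h1 := h D hD c (a * b)
      rwa [key, add_zero] at h1
    refine ⟨0, fun a b => ?_⟩
    have h3 := h ((D a).smulRight (D a)) (by
      intro x y z
      simp [key2]) b b
    simpa using h3
end

section
/- Let A be a commutative weakly amenable complex Banach algebra and let I be a closed ideal of A, regarded as a Banach algebra in its own right. Then the following are equivalent: (a) I is weakly amenable; (b) I is cyclically weakly amenable; (c) I is essential. -/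
/-- A non-unital subalgebra with the restricted norm and scalar action (the instance
`SubmoduleClass.toNormedSpace`, which instance search no longer finds here). -/
instance nonUnitalSubalgebraNormedSpace {A : Type*} [NonUnitalNormedRing A] [NormedSpace ℂ A]
    (I : NonUnitalSubalgebra ℂ A) : NormedSpace ℂ I where
  norm_smul_le c x := norm_smul_le c (x : A)

section Helpers

variable {A : Type*} [NonUnitalNormedCommRing A] [NormedSpace ℂ A]
    [IsScalarTower ℂ A A] [SMulCommClass ℂ A A]

/-- Multiplication by `x ∈ I`, as a map `A → I`. -/
noncomputable def idealMul (I : NonUnitalSubalgebra ℂ A)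
    (hideal : ∀ a : A, ∀ x ∈ I, a * x ∈ I) (x : I) : A →L[ℂ] I :=
  LinearMap.mkContinuous
    { toFun := fun a => (⟨a * (x : A), hideal a x x.2⟩ : I)
      map_add' := fun a b => Subtype.ext (add_mul a b (x : A))
      map_smul' := fun c a => Subtype.ext (smul_mul_assoc c a (x : A)) }
    ‖(x : A)‖ (fun a => by
      rw [mul_comm]
      exact norm_mul_le a (x : A))

theorem idealMul_coe (I : NonUnitalSubalgebra ℂ A)
    (hideal : ∀ a : A, ∀ x ∈ I, a * x ∈ I) (x : I) (a : A) :
    ((idealMul I hideal x a : I) : A) = a * (x : A) := rfl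

theorem functional_zero (I : NonUnitalSubalgebra ℂ A) (h : Essential I) (f : I →L[ℂ] ℂ)
    (hf : ∀ a b : I, f (a * b) = 0) (y : I) : f y = 0 := by
  have h1 : (Submodule.span ℂ {x : I | ∃ a b : I, a * b = x}) ≤ LinearMap.ker f.toLinearMap := by
    rw [Submodule.span_le]
    rintro _ ⟨a, b, rfl⟩
    exact hf a b
  have h2 : (f : I → ℂ) = fun _ => 0 := by
    refine Continuous.ext_on h f.continuous continuous_const ?_
    intro z hz
    exact h1 hz
  exact congrFun h2 y

theorem key_identity (hA : WeaklyAmenable A) (I : NonUnitalSubalgebra ℂ A)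
    (hideal : ∀ a : A, ∀ x ∈ I, a * x ∈ I) (D : I →L[ℂ] I →L[ℂ] ℂ) (hD : IsDerivation D)
    (x v w : I) (a b : A) :
    D (idealMul I hideal x a) (idealMul I hideal (v * w) b)
      = D x (idealMul I hideal (v * w) (a * b)) := by
  let R := idealMul I hideal
  let E : A →L[ℂ] A →L[ℂ] ℂ := D.bilinearComp (R x) (R (v * w)) -
    (ContinuousLinearMap.compL ℂ A A ℂ ((D x).comp (R (v * w)))).comp (ContinuousLinearMap.mul ℂ A)
  have hE : ∀ a b, E a b = D (R x a) (R (v * w) b) - D x (R (v * w) (a * b)) := fun a b => rfl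
  have hder : IsDerivation E := by
    intro a b c
    rw [hE, hE, hE]
    have e1 := hD (R x (a * b)) v (R w c)
    have e2 := hD (R x a) (R v b) (R w c)
    have e3 := hD (R v b) x (R w (a * c))
    have e4 := hD (R x b) v (R w (a * c))
    have c1 : R (v * w) c = v * R w c := Subtype.ext (by
      simp only [R, idealMul_coe, NonUnitalSubalgebra.coe_mul]; ac_rfl)
    have c2 : R (v * w) (b * c) = R v b * R w c := Subtype.ext (by
      simp only [R, idealMul_coe, NonUnitalSubalgebra.coe_mul]; ac_rfl)
    have c3 : R (v * w) (c * a) = v * R w (a * c) := Subtype.ext (by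
      simp only [R, idealMul_coe, NonUnitalSubalgebra.coe_mul]; ac_rfl)
    have c4 : R (v * w) (a * b * c) = R w (a * c) * R v b := Subtype.ext (by
      simp only [R, idealMul_coe, NonUnitalSubalgebra.coe_mul]; ac_rfl)
    have c5 : R (v * w) (a * (b * c)) = R w (a * c) * R v b := Subtype.ext (by
      simp only [R, idealMul_coe, NonUnitalSubalgebra.coe_mul]; ac_rfl)
    have c6 : R (v * w) (b * (c * a)) = R w (a * c) * R v b := Subtype.ext (by
      simp only [R, idealMul_coe, NonUnitalSubalgebra.coe_mul]; ac_rfl)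
    have d1 : R x a * R v b = R x (a * b) * v := Subtype.ext (by
      simp only [R, idealMul_coe, NonUnitalSubalgebra.coe_mul]; ac_rfl)
    have d2 : R v b * x = R x b * v := Subtype.ext (by
      simp only [R, idealMul_coe, NonUnitalSubalgebra.coe_mul]; ac_rfl)
    have d3 : R w c * R x a = x * R w (a * c) := Subtype.ext (by
      simp only [R, idealMul_coe, NonUnitalSubalgebra.coe_mul]; ac_rfl)
    have d4 : R w c * R x (a * b) = R w (a * c) * R x b := Subtype.ext (by
      simp only [R, idealMul_coe, NonUnitalSubalgebra.coe_mul]; ac_rfl)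
    rw [d4] at e1
    rw [d1, d3] at e2
    rw [d2] at e3
    rw [c1, c2, c3, c4, c5, c6]
    linear_combination -e1 + e2 - e3 + e4
  obtain ⟨F, hF⟩ := hA E hder
  have h0 := hF a b
  rw [mul_comm b a, sub_self, hE] at h0
  exact sub_eq_zero.mp h0

theorem essential_of_cyclic (I : NonUnitalSubalgebra ℂ A)
    (h : CyclicallyWeaklyAmenable I) : Essential I := by
  by_contra hne
  set S := (Submodule.span ℂ {x : I | ∃ a b : I, a * b = x}) with hS
  have : ∃ y : I, y ∉ closure (S : Set I) := by
    by_contra hc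
    push Not at hc
    exact hne hc
  obtain ⟨y, hy⟩ := this
  have hcl : IsClosed (S.topologicalClosure : Set I) := S.isClosed_topologicalClosure
  let Q := S.topologicalClosure.mkQL
  have hQ : Q y ≠ 0 := fun h0 => hy ((Submodule.Quotient.mk_eq_zero S.topologicalClosure).1 h0)
  obtain ⟨g, hg⟩ := SeparatingDual.exists_ne_zero (R := ℂ) hQ
  let f : I →L[ℂ] ℂ := g.comp Q
  have hfy : f y ≠ 0 := hg
  have hf : S.topologicalClosure ≤ LinearMap.ker f.toLinearMap := by
    intro z hz
    have : Q z = 0 := (Submodule.Quotient.mk_eq_zero S.topologicalClosure).2 hz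
    change g (Q z) = 0
    rw [this, map_zero]
  have hf' : ∀ a b : I, f (a * b) = 0 := fun a b =>
    hf (S.le_topologicalClosure (Submodule.subset_span ⟨a, b, rfl⟩))
  have := h (f.smulRight f) (by
    intro a b x
    simp [hf']) y y
  simp at this
  exact hfy this

end Helpers

/-- Let `A` be a commutative weakly amenable Banach algebra and `I` a closed ideal of
`A` (regarded as a Banach algebra in its own right). Then the following are
equivalent: (a) `I` is weakly amenable; (b) `I` is cyclically weakly amenable;
(c) `I` is essential. -/
theorem closedIdeal_weaklyAmenable_iff
    (A : Type*) [NonUnitalNormedCommRing A] [NormedSpace ℂ A]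
    [IsScalarTower ℂ A A] [SMulCommClass ℂ A A] [CompleteSpace A]
    (hA : WeaklyAmenable A)
    (I : NonUnitalSubalgebra ℂ A) (hclosed : IsClosed (I : Set A))
    (hideal : ∀ a : A, ∀ x ∈ I, a * x ∈ I) :
    (WeaklyAmenable I ↔ CyclicallyWeaklyAmenable I) ∧
    (WeaklyAmenable I ↔ Essential I) := by
  have hac : WeaklyAmenable I → CyclicallyWeaklyAmenable I := by
    intro h D hD a b
    obtain ⟨F, hF⟩ := h D hD
    rw [hF a b, hF b a]
    ring
  have hca : Essential I → WeaklyAmenable I := by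
    intro h D hD
    have h4 : ∀ a x v w b : I, D a (x * (v * (w * b))) = 0 := by
      intro a x v w b
      have e := key_identity hA I hideal D hD x v w (a : A) (b : A)
      have e1 := hD a x (v * (w * b))
      have c1 : idealMul I hideal x (a : A) = a * x := rfl
      have c2 : idealMul I hideal (v * w) (b : A) = v * (w * b) := Subtype.ext (by
        simp only [idealMul_coe, NonUnitalSubalgebra.coe_mul]; ac_rfl)
      have c3 : idealMul I hideal (v * w) ((a : A) * (b : A)) = v * (w * b) * a :=
        Subtype.ext (by
          simp only [idealMul_coe, NonUnitalSubalgebra.coe_mul]; ac_rfl)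
      rw [c1, c2, c3] at e
      linear_combination e - e1
    have comm : ∀ p q : I, p * q = q * p := fun p q => Subtype.ext (mul_comm (p : A) (q : A))
    have lift : ∀ (f : I →L[ℂ] ℂ) (p : I), (∀ q r : I, f (p * (q * r)) = 0) →
        ∀ q : I, f (p * q) = 0 := by
      intro f p hf q
      have := functional_zero I h (f.comp (idealMul I hideal p |>.comp
        (I.toSubmodule.subtypeL : I →L[ℂ] A))) (fun q r => by
          have := hf q r
          rw [comm] at this
          exact this) q
      rw [comm]
      exact this
    have h3 : ∀ a x v w : I, D a (x * (v * w)) = 0 := by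
      intro a x v w
      have := lift (D a) (x * v) (fun q r => by rw [mul_assoc]; exact h4 a x v q r) w
      rwa [mul_assoc] at this
    have h2 : ∀ a x v : I, D a (x * v) = 0 := fun a x v => lift (D a) x (h3 a x) v
    refine ⟨0, fun a b => ?_⟩
    simpa using functional_zero I h (D a) (h2 a) b
  have hbc : CyclicallyWeaklyAmenable I → Essential I := essential_of_cyclic I
  exact ⟨⟨hac, fun h => hca (hbc h)⟩, ⟨fun h => hbc (hac h), hca⟩⟩
end

section
/- Let A be a weakly amenable complex Banach algebra, let φ ∈ Δ(A), and let d be a nonzero element of A*. Then 𝔇_{d,φ} is not a derivation from A into A*. -/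
/-- If `A` is weakly amenable, `φ ∈ Δ(A)` and `d ∈ A*` is nonzero, then
`𝔇_{d,φ} : a ↦ d(a)φ` is not a derivation `A → A*`. -/
theorem smulRight_not_derivation_of_weaklyAmenable
    {A : Type*} [NonUnitalNormedRing A] [NormedSpace ℂ A]
    [IsScalarTower ℂ A A] [SMulCommClass ℂ A A] [CompleteSpace A]
    (hA : WeaklyAmenable A) (φ d : A →L[ℂ] ℂ) (hφ : IsCharacter φ) (hd : d ≠ 0) :
    ¬ IsDerivation (d.smulRight φ) := by
  intro hD
  obtain ⟨F, hF⟩ := hA _ hD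
  obtain ⟨u, hu⟩ : ∃ u, φ u ≠ 0 := by
    by_contra h
    push Not at h
    exact hφ.1 (ContinuousLinearMap.ext h)
  have key : ∀ a b : A, d a * φ b = F (a * b) - F (b * a) := fun a b => by
    simpa using hF a b
  have hdu : d u = 0 := by
    have h := key u u
    rw [sub_self] at h
    exact (mul_eq_zero.mp h).resolve_right hu
  apply hd
  ext a
  have h1 := key a u
  have h2 := key u a
  rw [hdu, zero_mul] at h2
  have h3 : d a * φ u = 0 := by linear_combination h1 + h2
  simpa using (mul_eq_zero.mp h3).resolve_right hu
end

section
/- Let A be a complex Banach algebra such that the closed linear span of the set of idempotent elements of A equals A. Then: (i) A is 0-point amenable; (ii) if moreover A is commutative, then A is cyclically amenable and cyclically weakly amenable. -/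
/-- If a Banach algebra `A` is the closed linear span of its idempotents, then
(i) `A` is 0-point amenable; (ii) if moreover `A` is commutative, then `A` is
cyclically amenable and cyclically weakly amenable. -/
theorem spanned_by_idempotents_amenability
    (A : Type*) [NonUnitalNormedRing A] [NormedSpace ℂ A]
    [IsScalarTower ℂ A A] [SMulCommClass ℂ A A] [CompleteSpace A]
    (hspan : Dense ((Submodule.span ℂ {e : A | e * e = e} : Submodule ℂ A) : Set A)) :
    ZeroPointAmenable A ∧
    ((∀ a b : A, a * b = b * a) →
      (CyclicallyAmenable A ∧ CyclicallyWeaklyAmenable A)) := by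
  refine ⟨?_, ?_⟩
  · intro φ d hφ hd
    refine ContinuousLinearMap.ext_on hspan ?_
    intro e he
    have he' : e * e = e := he
    have h1 := hd e e
    rw [he'] at h1
    have h2 : φ e * φ e = φ e := by
      rcases hφ with h | h
      · rw [← h.2, he']
      · simp [h]
    have h3 : φ e * d e = 0 := by
      linear_combination -(φ e) * h1 - 2 * d e * h2
    simp only [ContinuousLinearMap.zero_apply]
    linear_combination h1 + 2 * h3
  · intro hc
    have key : ∀ D : A →L[ℂ] A →L[ℂ] ℂ, IsDerivation D → D = 0 := by
      intro D hD
      refine ContinuousLinearMap.ext_on hspan ?_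
      intro e he
      have he' : e * e = e := he
      ext x
      have h1 := hD e e x
      have h2 := hD e e (e * x)
      rw [he', hc x e] at h1
      rw [hc (e * x) e, ← mul_assoc, he'] at h2
      simp only [ContinuousLinearMap.zero_apply]
      linear_combination h1 - 2 * h2
    refine ⟨fun D hD _ => ⟨0, fun a b => ?_⟩, fun D hD a b => ?_⟩ <;> simp [key D hD]
end
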